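/- Let n ≥ 1 and let K be a flag subcomplex of ∂Δⁿ. Then the relative barycentric subdivision b(∂Δⁿ, K) is an iterated edge subdivision of Oⁿ, the boundary of the n-octahedron. -/

import Mathlib

/-!
The complex `b(∂Δⁿ, K)` is the nested set complex of the building set `G` formed by the singletons
and the nonfaces of `K` (`relbary_eq_nested`): incomparable members of a nested set have their
union outside `G`, so they are vertices of `K` joined by an edge, and flagness of `K` makes all of
them span a face. The octahedron is the nested set complex of the singletons and the initial
segments of an enumeration of the vertices (`isom_octa_nested`). Since `K` is flag and is not the
full simplex, some pair `{u, v}` is not in `K`; enumerating the vertices from `u, v` makes this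
second building set a subset of `G`.

Flagness of `K` also gives that every member of `G` with at least two elements is a disjoint union
of two members of `G` (`splits_nonfaces`). Between two building sets `B ⊂ G` with this property
one can add the missing members one at a time, each being a disjoint union `C ⊔ D` of members
already present: a missing set of this form exists, because a minimal missing member of `G` has
it, and adding a maximal one keeps the family closed under unions of intersecting members
(`exists_next`). Each such addition subdivides the edge `{C, D}` of the nested set complex
(`isom_subdiv_nested`); all the complexes involved are determined by their edges, so this is
checked on pairs of vertices, where `no_bad_triple` supplies flagness.
-/

open scoped Classical

noncomputable section

/-- A collection of finite subsets of the vertex type `V` (the faces). -/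
abbrev SCplx (V : Type) : Type := Set (Finset V)

/-- `L` is an abstract simplicial complex: every face is nonempty, and faces are
closed under passing to nonempty subsets. -/
def IsComplex {V : Type} (L : SCplx V) : Prop :=
  (∀ s ∈ L, s.Nonempty) ∧ ∀ s ∈ L, ∀ t : Finset V, t ⊆ s → t.Nonempty → t ∈ L

/-- The vertex set of a complex. -/
def verts {V : Type} (L : SCplx V) : Set V := {v | ({v} : Finset V) ∈ L}

/-- `e` is an edge of `L`: a face with two elements. -/
def IsEdge {V : Type} (L : SCplx V) (e : Finset V) : Prop := e ∈ L ∧ e.card = 2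

/-- The link of a simplex `σ`. -/
def link {V : Type} (L : SCplx V) (σ : Finset V) : SCplx V :=
  {τ | τ ∈ L ∧ Disjoint τ σ ∧ τ ∪ σ ∈ L}

/-- `L` is flag: every nonempty finite set of vertices which are pairwise joined
by edges of `L` is a face of `L`. -/
def FlagCplx {V : Type} (L : SCplx V) : Prop :=
  ∀ s : Finset V, s.Nonempty → (∀ v ∈ s, ({v} : Finset V) ∈ L) →
    (∀ u ∈ s, ∀ v ∈ s, u ≠ v → ({u, v} : Finset V) ∈ L) → s ∈ L

/-- Simplicial isomorphism: a bijection of vertex sets carrying simplices to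
simplices in both directions. -/
def Isom {V W : Type} (L : SCplx V) (L' : SCplx W) : Prop :=
  ∃ f : V → W, Set.BijOn f (verts L) (verts L') ∧
    (∀ s ∈ L, s.image f ∈ L') ∧ (∀ t ∈ L', ∃ s ∈ L, s.image f = t)

/-- Edge subdivision of `L` along the edge `e`; the new vertex `v_e` is `none`. -/
def subdiv {V : Type} (L : SCplx V) (e : Finset V) : SCplx (Option V) :=
  {σ | ∃ τ ∈ L, ¬ e ⊆ τ ∧ σ = τ.image some} ∪
    {σ | ∃ τ f : Finset V, (τ = ∅ ∨ τ ∈ link L e) ∧ f ⊂ e ∧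
      σ = insert none ((τ ∪ f).image some)}

/-- `IterSub L L'` : `L'` is an iterated edge subdivision of `L`, that is, there is
a chain `L = L₀, L₁, …, L_m` with `L_{i+1} = Sub_{e_i}(L_i)` and `L_m ≅ L'`. -/
inductive IterSub : {V : Type} → SCplx V → {W : Type} → SCplx W → Prop
  | iso {V W : Type} {L : SCplx V} {L' : SCplx W} : Isom L L' → IterSub L L'
  | step {V W : Type} {L : SCplx V} {L' : SCplx W} (e : Finset V) :
      IsEdge L e → IterSub (subdiv L e) L' → IterSub L L'

/-- The relative barycentric subdivision `b(L, K)`: vertices are the simplices of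
`L ∖ K` (barycenters) together with the vertices of `K` (as singleton simplices);
faces are spanned by chains of simplices of `L` with at most one member in `K`. -/
def relbary {V : Type} (L K : SCplx V) : SCplx (Finset V) :=
  {S | S.Nonempty ∧ ∃ (τ : Finset V) (c : Finset (Finset V)),
    (τ = ∅ ∨ τ ∈ K) ∧ (∀ σ ∈ c, σ ∈ L ∧ σ ∉ K) ∧
    (∀ σ ∈ c, ∀ σ' ∈ c, σ ⊆ σ' ∨ σ' ⊆ σ) ∧ (∀ σ ∈ c, τ ⊆ σ) ∧
    S = τ.image (fun v => ({v} : Finset V)) ∪ c}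

/-- The join of two complexes on disjoint vertex sets. -/
def join {V W : Type} (L₁ : SCplx V) (L₂ : SCplx W) : SCplx (V ⊕ W) :=
  {s | ∃ (s₁ : Finset V) (s₂ : Finset W), (s₁ = ∅ ∨ s₁ ∈ L₁) ∧ (s₂ = ∅ ∨ s₂ ∈ L₂) ∧
    (s₁.Nonempty ∨ s₂.Nonempty) ∧ s = s₁.image Sum.inl ∪ s₂.image Sum.inr}

/-- The two-point complex `S⁰` (two vertices, no edge). -/
def S0 : SCplx Bool := {s | s = {true} ∨ s = {false}}

/-- The suspension of `L` : the join of `L` with `S⁰`. -/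
def susp {V : Type} (L : SCplx V) : SCplx (V ⊕ Bool) := join L S0

/-- The cone on `L`, with cone vertex `none`. -/
def cone {V : Type} (L : SCplx V) : SCplx (Option V) :=
  {σ | ∃ τ : Finset V, (τ = ∅ ∨ τ ∈ L) ∧
    ((τ.Nonempty ∧ σ = τ.image some) ∨ σ = insert none (τ.image some))}

/-- The boundary of the `n`-simplex : all nonempty proper subsets of an
`(n+1)`-element vertex set. -/
def bdSimplex (n : ℕ) : SCplx (Fin (n + 1)) :=
  {s | s.Nonempty ∧ s ≠ Finset.univ}

/-- The boundary complex `∂σ` of a simplex `σ` : proper nonempty subsets of `σ`. -/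
def bdry {V : Type} (σ : Finset V) : SCplx V := {t | t ⊂ σ ∧ t.Nonempty}

/-- The boundary of the `n`-octahedron, i.e. the `n`-fold join `S⁰ * ⋯ * S⁰`. -/
def octa (n : ℕ) : SCplx (Fin n × Bool) :=
  {s | s.Nonempty ∧
    ∀ i : Fin n, ¬ (((i, true) : Fin n × Bool) ∈ s ∧ ((i, false) : Fin n × Bool) ∈ s)}

end


/-! ### Simplicial isomorphisms and edge subdivisions -/

theorem face_subset_verts {V : Type} {L : SCplx V} (hL : IsComplex L) {s : Finset V}
    (hs : s ∈ L) : (s : Set V) ⊆ verts L := by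
  intro v hv
  exact hL.2 s hs {v} (by simpa using hv) (by simp)

/-- `f` is a simplicial isomorphism from `L` to `M`, in a form that only asks about sets of
vertices of `L`. -/
structure IsoMap {V W : Type} (L : SCplx V) (M : SCplx W) (f : V → W) : Prop where
  inj : Set.InjOn f (verts L)
  surj : verts M ⊆ f '' verts L
  face : ∀ s : Finset V, (s : Set V) ⊆ verts L → (s ∈ L ↔ s.image f ∈ M)

/-- The images in `IsoMap.face` may be formed with any decidability instance. -/
theorem IsoMap.of {V W : Type} [DecidableEq W] {L : SCplx V} {M : SCplx W} {f : V → W}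
    (inj : Set.InjOn f (verts L)) (surj : verts M ⊆ f '' verts L)
    (face : ∀ s : Finset V, (s : Set V) ⊆ verts L → (s ∈ L ↔ s.image f ∈ M)) :
    IsoMap L M f := by
  refine ⟨inj, surj, fun s hs => ?_⟩
  convert face s hs

theorem IsoMap.isom {V W : Type} {L : SCplx V} {M : SCplx W} {f : V → W}
    (hL : IsComplex L) (hM : IsComplex M) (h : IsoMap L M f) : Isom L M := by
  refine ⟨f, ⟨?_, h.inj, h.surj⟩, ?_, ?_⟩
  · intro v hv
    have := (h.face {v} (by simpa using hv)).1 hv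
    simpa [verts] using this
  · intro s hs
    exact (h.face s (face_subset_verts hL hs)).1 hs
  · intro t ht
    have h1 : (t : Set W) ⊆ f '' verts L := (face_subset_verts hM ht).trans h.surj
    obtain ⟨s, hs, rfl⟩ := Finset.subset_set_image_iff.1 h1
    exact ⟨s, (h.face s hs).2 ht, rfl⟩

theorem Isom.isoMap {V W : Type} {L : SCplx V} {M : SCplx W}
    (hL : IsComplex L) (h : Isom L M) : ∃ f, IsoMap L M f := by
  obtain ⟨f, hb, h1, h2⟩ := h
  refine ⟨f, hb.injOn, hb.surjOn, fun s hs => ⟨h1 s, fun h => ?_⟩⟩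
  obtain ⟨s', hs', he⟩ := h2 _ h
  have hs'' := face_subset_verts hL hs'
  have : s = s' := by
    rw [← Finset.coe_inj, ← hb.injOn.image_eq_image_iff hs hs'', ← Finset.coe_image,
      ← Finset.coe_image, he]
  rwa [this]

theorem Isom.trans {U V W : Type} {L : SCplx U} {M : SCplx V} {N : SCplx W}
    (h : Isom L M) (h' : Isom M N) : Isom L N := by
  obtain ⟨f, hf, f1, f2⟩ := h
  obtain ⟨g, hg, g1, g2⟩ := h'
  refine ⟨g ∘ f, hg.comp hf, fun s hs => ?_, fun t ht => ?_⟩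
  · rw [← Finset.image_image]
    exact g1 _ (f1 _ hs)
  · obtain ⟨s, hs, rfl⟩ := g2 t ht
    obtain ⟨r, hr, rfl⟩ := f2 s hs
    exact ⟨r, hr, by rw [← Finset.image_image]⟩

theorem option_finset_cases {V : Type} [DecidableEq (Option V)] (s : Finset (Option V)) :
    ∃ t : Finset V, s = t.image some ∨ s = insert none (t.image some) := by
  refine ⟨s.eraseNone, ?_⟩
  by_cases h : none ∈ s
  · right
    ext (_ | v) <;> simp [h]
  · left
    ext (_ | v) <;> simp [h]

theorem mem_subdiv_some_aux {V : Type} {L : SCplx V} {e t : Finset V} :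
    t.image some ∈ subdiv L e ↔ t ∈ L ∧ ¬ e ⊆ t := by
  constructor
  · rintro (⟨τ, hτ, hn, h⟩ | ⟨τ, f, _, _, h⟩)
    · rw [(Finset.image_injective (Option.some_injective V)) h]
      exact ⟨hτ, hn⟩
    · have : (none : Option V) ∈ t.image some := by rw [h]; simp
      simp at this
  · rintro ⟨h, h'⟩
    exact Or.inl ⟨t, h, h', rfl⟩

theorem mem_subdiv_some {V : Type} [DecidableEq (Option V)] {L : SCplx V} {e t : Finset V} :
    t.image some ∈ subdiv L e ↔ t ∈ L ∧ ¬ e ⊆ t := by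
  convert mem_subdiv_some_aux (L := L) (e := e) (t := t)

theorem mem_subdiv_none_aux {V : Type} {L : SCplx V}
    (hL : IsComplex L) {e t : Finset V}
    (he : e ∈ L) : insert none (t.image some) ∈ subdiv L e ↔ t ∪ e ∈ L ∧ ¬ e ⊆ t := by
  constructor
  · rintro (⟨τ, hτ, hn, h⟩ | ⟨τ, f, hτ, hf, h⟩)
    · have : (none : Option V) ∈ τ.image some := by rw [← h]; simp
      simp at this
    · have ht : t = τ ∪ f := by
        ext v
        have := congrArg (fun s => some v ∈ s) h
        simpa using this
      subst ht
      have h1 : τ ∪ f ∪ e = τ ∪ e := by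
        rw [Finset.union_assoc, Finset.union_eq_right.2 hf.1]
      rw [h1]
      rcases hτ with rfl | hτ
      · exact ⟨by simpa using he, by simpa using hf.2⟩
      · refine ⟨hτ.2.2, fun hs => hf.2 fun v hv => ?_⟩
        rcases Finset.mem_union.1 (hs hv) with h | h
        · exact absurd hv (Finset.disjoint_left.1 hτ.2.1 h)
        · exact h
  · rintro ⟨h, h'⟩
    refine Or.inr ⟨t \ e, t ∩ e, ?_, ?_, ?_⟩
    · rcases (t \ e).eq_empty_or_nonempty with h0 | h0
      · exact Or.inl h0
      · refine Or.inr ⟨hL.2 _ h _ ?_ h0, Finset.sdiff_disjoint, ?_⟩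
        · exact Finset.sdiff_subset.trans Finset.subset_union_left
        · rwa [Finset.sdiff_union_self_eq_union]
    · refine ⟨Finset.inter_subset_right, fun hs => h' (hs.trans Finset.inter_subset_left)⟩
    · rw [Finset.sdiff_union_inter]

/-- Membership in an edge subdivision of a face containing the new vertex. Any decidability
instances are allowed here and in `mem_subdiv_some`, so that both apply when the vertices are
themselves finite sets. -/
theorem mem_subdiv_none {V : Type} [DecidableEq V] [DecidableEq (Option V)] {L : SCplx V}
    (hL : IsComplex L) {e t : Finset V} (he : e ∈ L) :
    insert none (t.image some) ∈ subdiv L e ↔ t ∪ e ∈ L ∧ ¬ e ⊆ t := by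
  convert mem_subdiv_none_aux hL (t := t) he

theorem isComplex_subdiv {V : Type} {L : SCplx V} (hL : IsComplex L) {e : Finset V}
    (he : e ∈ L) : IsComplex (subdiv L e) := by
  constructor
  · intro s hs
    obtain ⟨t, rfl | rfl⟩ := option_finset_cases s
    · simpa using hL.1 _ (mem_subdiv_some.1 hs).1
    · simp
  · intro s hs t hts htn
    obtain ⟨s, rfl | rfl⟩ := option_finset_cases s <;>
      obtain ⟨t, rfl | rfl⟩ := option_finset_cases t
    · have hts : t ⊆ s := by
        intro v hv
        have := @hts (some v) (by simpa using hv)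
        simpa using this
      rw [mem_subdiv_some] at hs ⊢
      exact ⟨hL.2 _ hs.1 _ hts (by simpa using htn), fun h => hs.2 (h.trans hts)⟩
    · have := @hts none (by simp)
      simp at this
    · have hts : t ⊆ s := by
        intro v hv
        have := @hts (some v) (by simpa using hv)
        simpa using this
      rw [mem_subdiv_none hL he] at hs
      rw [mem_subdiv_some]
      exact ⟨hL.2 _ hs.1 _ (hts.trans Finset.subset_union_left) (by simpa using htn),
        fun h => hs.2 (h.trans hts)⟩
    · have hts : t ⊆ s := by
        intro v hv
        have := @hts (some v) (by simpa using hv)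
        simpa using this
      rw [mem_subdiv_none hL he] at hs ⊢
      refine ⟨hL.2 _ hs.1 _ (Finset.union_subset_union_left hts) ?_, fun h => hs.2 (h.trans hts)⟩
      exact (hL.1 _ he).mono Finset.subset_union_right

theorem verts_subdiv_some {V : Type} {L : SCplx V} {e : Finset V} (he : e.card = 2) {v : V} :
    some v ∈ verts (subdiv L e) ↔ v ∈ verts L := by
  have h : ({some v} : Finset (Option V)) = ({v} : Finset V).image some := by simp
  have h2 : ¬ e ⊆ {v} := fun h => by
    have := Finset.card_le_card h
    simp [he] at this
  simp only [verts, Set.mem_ofPred_eq]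
  rw [h, mem_subdiv_some]
  simp [h2]

theorem verts_subdiv_none {V : Type} {L : SCplx V} (hL : IsComplex L) {e : Finset V}
    (he : e ∈ L) : none ∈ verts (subdiv L e) := by
  have h : ({none} : Finset (Option V)) = insert none ((∅ : Finset V).image some) := by simp
  simp only [verts, Set.mem_ofPred_eq]
  rw [h, mem_subdiv_none hL he]
  refine ⟨by simpa using he, fun hs => ?_⟩
  exact (hL.1 _ he).ne_empty (Finset.subset_empty.1 hs)

theorem isoMap_subdiv {V W : Type} {L : SCplx V} {M : SCplx W} {f : V → W}
    (hL : IsComplex L) (hM : IsComplex M) (h : IsoMap L M f) {e : Finset V} (he : IsEdge L e)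
    (he' : IsEdge M (e.image f)) :
    IsoMap (subdiv L e) (subdiv M (e.image f)) (Option.map f) := by
  have hev := face_subset_verts hL he.1
  have himg : ∀ t : Finset V, (t.image some).image (Option.map f) = (t.image f).image some := by
    intro t
    simp [Finset.image_image, Function.comp_def]
  have hsub : ∀ t : Finset V, (t : Set V) ⊆ verts L → (e.image f ⊆ t.image f ↔ e ⊆ t) := by
    intro t ht
    rw [← Finset.coe_subset, ← Finset.coe_subset, Finset.coe_image, Finset.coe_image,
      h.inj.image_subset_image_iff hev ht]
  refine IsoMap.of ?_ ?_ ?_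
  · rintro (_ | v) hv (_ | w) hw hvw
    · rfl
    · simp at hvw
    · simp at hvw
    · rw [verts_subdiv_some he.2] at hv hw
      rw [h.inj hv hw (by simpa using hvw)]
  · rintro (_ | w) hw
    · exact ⟨none, verts_subdiv_none hL he.1, rfl⟩
    · rw [verts_subdiv_some he'.2] at hw
      obtain ⟨v, hv, rfl⟩ := h.surj hw
      exact ⟨some v, (verts_subdiv_some he.2).2 hv, rfl⟩
  · intro s hs
    obtain ⟨t, rfl | rfl⟩ := option_finset_cases s
    · have ht : (t : Set V) ⊆ verts L := fun v hv =>
        (verts_subdiv_some he.2).1 (hs (by simpa using hv))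
      rw [himg, mem_subdiv_some, mem_subdiv_some, hsub t ht, h.face t ht]
    · have ht : (t : Set V) ⊆ verts L := fun v hv =>
        (verts_subdiv_some he.2).1 (hs (by simpa using hv))
      rw [Finset.image_insert, himg, Option.map_none, mem_subdiv_none hL he.1,
        mem_subdiv_none hM he'.1, hsub t ht, ← Finset.image_union, h.face (t ∪ e)]
      rw [Finset.coe_union]
      exact Set.union_subset ht hev

/-- Since `IterSub` peels subdivisions off at the start and allows an isomorphism only at the
end, adding one more subdivision at the end means pulling an edge back along an isomorphism. -/
theorem IterSub.snoc {V W : Type} {L : SCplx V} {M : SCplx W} (h : IterSub L M) :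
    IsComplex L → IsComplex M → ∀ {e : Finset W}, IsEdge M e →
    ∀ {X : Type} {N : SCplx X}, Isom (subdiv M e) N → IterSub L N := by
  induction h with
  | iso hi =>
    intro hL hM e he X N hN
    obtain ⟨f, hf⟩ := Isom.isoMap hL hi
    have h1 := (face_subset_verts hM he.1).trans hf.surj
    obtain ⟨e', he', rfl⟩ := Finset.subset_set_image_iff.1 h1
    have hE : IsEdge _ e' := ⟨(hf.face _ he').2 he.1, by
      rw [← he.2, Finset.card_image_of_injOn (hf.inj.mono he')]⟩
    refine IterSub.step e' hE (IterSub.iso (Isom.trans ?_ hN))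
    exact (isoMap_subdiv hL hM hf hE he).isom (isComplex_subdiv hL hE.1)
      (isComplex_subdiv hM he.1)
  | step e' he' _ ih =>
    intro hL hM e he X N hN
    exact IterSub.step e' he' (ih (isComplex_subdiv hL he'.1) hM he hN)

/-! ### Flag building sets and their nested set complexes -/

/-- A connected building set on `V`: a family of nonempty subsets of `V` containing the
singletons and `V` itself, and closed under unions of intersecting members. -/
structure Building {V : Type} [Fintype V] (B : Set (Finset V)) : Prop where
  nonempty : ∀ A ∈ B, A.Nonempty
  single : ∀ v, {v} ∈ B
  top : Finset.univ ∈ B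
  union : ∀ A ∈ B, ∀ C ∈ B, (A ∩ C).Nonempty → A ∪ C ∈ B

/-- Every member of `B` with at least two elements is a disjoint union of two members. For a
building set this is equivalent to flagness of the nested set complex. -/
def Splits {V : Type} (B : Set (Finset V)) : Prop :=
  ∀ A ∈ B, 2 ≤ A.card → ∃ C ∈ B, ∃ D ∈ B, Disjoint C D ∧ C ∪ D = A

/-- Two members of a building set that may occur together in a nested set. Incomparable
compatible members are disjoint by `Building.union`. -/
def Compat {V : Type} (B : Set (Finset V)) (A A' : Finset V) : Prop :=
  A ⊆ A' ∨ A' ⊆ A ∨ A ∪ A' ∉ B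

theorem Compat.symm {V : Type} {B : Set (Finset V)} {A A' : Finset V} (h : Compat B A A') :
    Compat B A' A := by
  rcases h with h | h | h
  · exact Or.inr (Or.inl h)
  · exact Or.inl h
  · exact Or.inr (Or.inr (by rwa [Finset.union_comm]))

/-- The nested set complex of `B`, with vertices the members of `B` other than `V`. The usual
definition asks that no union of two or more pairwise incomparable members of a face be in `B`;
here only unions of two members are considered, which is the same when `Splits B` holds. -/
def nested {V : Type} [Fintype V] (B : Set (Finset V)) : SCplx (Finset V) :=
  {S | S.Nonempty ∧ (∀ A ∈ S, A ∈ B ∧ A ≠ Finset.univ) ∧ ∀ A ∈ S, ∀ A' ∈ S, Compat B A A'}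

theorem isComplex_nested {V : Type} [Fintype V] (B : Set (Finset V)) :
    IsComplex (nested B) :=
  ⟨fun _ h => h.1, fun _ h _ ht hn =>
    ⟨hn, fun A hA => h.2.1 A (ht hA), fun A hA A' hA' => h.2.2 A (ht hA) A' (ht hA')⟩⟩

theorem mem_verts_nested {V : Type} [Fintype V] {B : Set (Finset V)} {A : Finset V} :
    A ∈ verts (nested B) ↔ A ∈ B ∧ A ≠ Finset.univ := by
  simp [verts, nested, Compat]

theorem Building.union_of_mem {V : Type} [Fintype V] {B : Set (Finset V)} (hB : Building B)
    {A A' : Finset V} (hA : A ∈ B) (hA' : A' ∈ B) {v : V} (h1 : v ∈ A) (h2 : v ∈ A') :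
    A ∪ A' ∈ B :=
  hB.union A hA A' hA' ⟨v, by simp [h1, h2]⟩

/-- For three members whose pairwise unions are not in a building set satisfying `Splits`, the
union of all three is not in it either. By induction on its size, every member `E` of `B` inside
`A ∪ C ∪ D` lies in one of the three and misses the other two: `E` splits into two parts with
that property, and if these lay in different ones among `A`, `C`, `D`, then the union of those
two would be in `B`. -/
theorem no_bad_triple {V : Type} [Fintype V] {B : Set (Finset V)} (hB : Building B)
    (hs : Splits B) {A C D : Finset V} (hA : A ∈ B) (hC : C ∈ B) (hD : D ∈ B)
    (hAC : A ∪ C ∉ B) (hAD : A ∪ D ∉ B) (hCD : C ∪ D ∉ B) : A ∪ C ∪ D ∉ B := by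
  have key : ∀ m : ℕ, ∀ E ∈ B, E.card = m → E ⊆ A ∪ C ∪ D →
      (E ⊆ A ∧ (∀ v ∈ E, v ∉ C) ∧ (∀ v ∈ E, v ∉ D)) ∨
      (E ⊆ C ∧ (∀ v ∈ E, v ∉ A) ∧ (∀ v ∈ E, v ∉ D)) ∨
      (E ⊆ D ∧ (∀ v ∈ E, v ∉ A) ∧ (∀ v ∈ E, v ∉ C)) := by
    intro m
    have dAC : ∀ v ∈ A, v ∉ C := fun v h1 h2 => hAC (hB.union_of_mem hA hC h1 h2)
    have dAD : ∀ v ∈ A, v ∉ D := fun v h1 h2 => hAD (hB.union_of_mem hA hD h1 h2)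
    have dCD : ∀ v ∈ C, v ∉ D := fun v h1 h2 => hCD (hB.union_of_mem hC hD h1 h2)
    -- a member of `B` inside `X ∪ Y` that meets both forces `X ∪ Y ∈ B`
    have glue : ∀ X ∈ B, ∀ Y ∈ B, ∀ E ∈ B, E ⊆ X ∪ Y → (∃ v ∈ E, v ∈ X) → (∃ v ∈ E, v ∈ Y) →
        X ∪ Y ∈ B := by
      rintro X hX Y hY E hE hEs ⟨v, hv, hvX⟩ ⟨w, hw, hwY⟩
      have h1 := hB.union_of_mem hX hE hvX hv
      have h2 := hB.union_of_mem h1 hY (v := w) (by simp [hw]) hwY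
      have : X ∪ E ∪ Y = X ∪ Y := by
        ext u
        have := @hEs u
        grind
      rwa [this] at h2
    induction m using Nat.strong_induction_on with
    | _ m ih =>
    intro E hE hm hEs
    by_cases hc : 2 ≤ E.card
    · obtain ⟨F, hF, G, hG, hd, hu⟩ := hs E hE hc
      have hFn := hB.nonempty F hF
      have hGn := hB.nonempty G hG
      have hcard : F.card + G.card = E.card := by rw [← hu, Finset.card_union_of_disjoint hd]
      have := hFn.card_pos
      have := hGn.card_pos
      have hFE : F ⊆ E := hu ▸ Finset.subset_union_left
      have hGE : G ⊆ E := hu ▸ Finset.subset_union_right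
      obtain ⟨f, hf⟩ := hFn
      obtain ⟨g, hg⟩ := hGn
      have hfE := hFE hf
      have hgE := hGE hg
      have sub : ∀ X Y : Finset V, F ⊆ X → G ⊆ Y → E ⊆ X ∪ Y := fun X Y h h' =>
        hu ▸ Finset.union_subset_union h h'
      have sub' : ∀ X Y : Finset V, F ⊆ X → G ⊆ Y → E ⊆ Y ∪ X := fun X Y h h' =>
        Finset.union_comm X Y ▸ sub X Y h h'
      have dis : ∀ X : Finset V, (∀ v ∈ F, v ∉ X) → (∀ v ∈ G, v ∉ X) → ∀ v ∈ E, v ∉ X := by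
        intro X h h' v hv
        rw [← hu, Finset.mem_union] at hv
        exact hv.elim (h v) (h' v)
      have c1 := ih F.card (by omega) F hF rfl (hFE.trans hEs)
      have c2 := ih G.card (by omega) G hG rfl (hGE.trans hEs)
      have g1 := glue A hA C hC E hE
      have g2 := glue A hA D hD E hE
      have g3 := glue C hC D hD E hE
      rcases c1 with ⟨a, b, c⟩ | ⟨a, b, c⟩ | ⟨a, b, c⟩ <;>
        rcases c2 with ⟨a', b', c'⟩ | ⟨a', b', c'⟩ | ⟨a', b', c'⟩
      · exact Or.inl ⟨hu ▸ Finset.union_subset a a', dis _ b b', dis _ c c'⟩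
      · exact absurd (g1 (sub _ _ a a') ⟨f, hfE, a hf⟩ ⟨g, hgE, a' hg⟩) hAC
      · exact absurd (g2 (sub _ _ a a') ⟨f, hfE, a hf⟩ ⟨g, hgE, a' hg⟩) hAD
      · exact absurd (g1 (sub' _ _ a a') ⟨g, hgE, a' hg⟩ ⟨f, hfE, a hf⟩) hAC
      · exact Or.inr (Or.inl ⟨hu ▸ Finset.union_subset a a', dis _ b b', dis _ c c'⟩)
      · exact absurd (g3 (sub _ _ a a') ⟨f, hfE, a hf⟩ ⟨g, hgE, a' hg⟩) hCD
      · exact absurd (g2 (sub' _ _ a a') ⟨g, hgE, a' hg⟩ ⟨f, hfE, a hf⟩) hAD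
      · exact absurd (g3 (sub' _ _ a a') ⟨g, hgE, a' hg⟩ ⟨f, hfE, a hf⟩) hCD
      · exact Or.inr (Or.inr ⟨hu ▸ Finset.union_subset a a', dis _ b b', dis _ c c'⟩)
    · have h1 : E.card = 1 := by
        have := (hB.nonempty E hE).card_pos
        omega
      obtain ⟨v, rfl⟩ := Finset.card_eq_one.1 h1
      simp only [Finset.singleton_subset_iff, Finset.mem_union, Finset.mem_singleton,
        forall_eq] at hEs ⊢
      have := dAC v
      have := dAD v
      have := dCD v
      tauto
  intro h
  obtain ⟨a, ha⟩ := hB.nonempty A hA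
  obtain ⟨c, hc⟩ := hB.nonempty C hC
  have := key _ _ h rfl (Finset.Subset.refl _)
  grind

section step

variable {V : Type} [Fintype V] {B : Set (Finset V)} {C D : Finset V}

/-- If `C ⊔ D ∉ B`, then `C` and `D` are the maximal members of `B` inside `C ⊔ D`. -/
theorem subset_factor (hB : Building B) (hC : C ∈ B) (hD : D ∈ B) (hx : C ∪ D ∉ B)
    {A : Finset V} (hA : A ∈ B) (hAx : A ⊆ C ∪ D) : A ⊆ C ∨ A ⊆ D := by
  by_contra hcon
  obtain ⟨h1, h2⟩ := not_or.1 hcon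
  obtain ⟨v, hv, hvC⟩ := Finset.not_subset.1 h1
  obtain ⟨w, hw, hwD⟩ := Finset.not_subset.1 h2
  have hvD : v ∈ D := by have := hAx hv; grind
  have hwC : w ∈ C := by have := hAx hw; grind
  have h3 := hB.union_of_mem (hB.union_of_mem hA hC hw hwC) hD (v := v) (by simp [hv]) hvD
  have : A ∪ C ∪ D = C ∪ D := by
    rw [Finset.union_assoc, Finset.union_eq_right.2 hAx]
  rw [this] at h3
  exact hx h3

/-- Among the old vertices, adding `C ⊔ D` to `B` only destroys the edge `{C, D}`. -/
theorem compat_insert_iff (hB : Building B) (hC : C ∈ B) (hD : D ∈ B)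
    (hx : C ∪ D ∉ B) {A A' : Finset V} (hA : A ∈ B) (hA' : A' ∈ B) :
    Compat (insert (C ∪ D) B) A A' ↔
      Compat B A A' ∧ ¬ (A = C ∧ A' = D) ∧ ¬ (A = D ∧ A' = C) := by
  have hCD : ¬ C ⊆ D := fun h => hx (by rwa [Finset.union_eq_right.2 h])
  have hDC : ¬ D ⊆ C := fun h => hx (by rwa [Finset.union_eq_left.2 h])
  constructor
  · intro h
    refine ⟨?_, ?_, ?_⟩
    · rcases h with h | h | h
      · exact Or.inl h
      · exact Or.inr (Or.inl h)
      · exact Or.inr (Or.inr fun h' => h (Or.inr h'))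
    · rintro ⟨rfl, rfl⟩
      rcases h with h | h | h
      · exact hCD h
      · exact hDC h
      · exact h (Or.inl rfl)
    · rintro ⟨rfl, rfl⟩
      rcases h with h | h | h
      · exact hDC h
      · exact hCD h
      · exact h (Or.inl (Finset.union_comm _ _))
  · rintro ⟨h | h | h, h1, h2⟩
    · exact Or.inl h
    · exact Or.inr (Or.inl h)
    · by_cases hs : A ⊆ A'
      · exact Or.inl hs
      by_cases hs' : A' ⊆ A
      · exact Or.inr (Or.inl hs')
      refine Or.inr (Or.inr ?_)
      rintro (he | hmem)
      · have dCD : ∀ v ∈ C, v ∉ D := fun v h h' => hx (hB.union_of_mem hC hD h h')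
        have c1 := subset_factor hB hC hD hx hA (he ▸ Finset.subset_union_left)
        have c2 := subset_factor hB hC hD hx hA' (he ▸ Finset.subset_union_right)
        have he' : ∀ v, v ∈ A ∨ v ∈ A' ↔ v ∈ C ∨ v ∈ D := fun v => by
          rw [← Finset.mem_union, he, Finset.mem_union]
        obtain ⟨c, hc⟩ := hB.nonempty C hC
        obtain ⟨d, hd⟩ := hB.nonempty D hD
        rcases c1 with c1 | c1 <;> rcases c2 with c2 | c2
        · have := he' d; have := dCD d; grind
        · apply h1; constructor <;> ext v <;> have := he' v <;> have := dCD v <;> grind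
        · apply h2; constructor <;> ext v <;> have := he' v <;> have := dCD v <;> grind
        · have := he' c; have := dCD c; grind
      · exact h hmem

/-- The neighbours of the new vertex `C ⊔ D` are `C`, `D` and their common neighbours. -/
theorem compat_new_iff (hB : Building B) (hs : Splits B) (hB' : Building (insert (C ∪ D) B))
    (hC : C ∈ B) (hD : D ∈ B) (hx : C ∪ D ∉ B) {A : Finset V} (hA : A ∈ B) :
    Compat (insert (C ∪ D) B) A (C ∪ D) ↔
      A = C ∨ A = D ∨ (Compat B A C ∧ Compat B A D) := by
  have hAx : A ≠ C ∪ D := fun h => hx (h ▸ hA)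
  constructor
  · intro h
    by_cases h1 : A = C
    · exact Or.inl h1
    by_cases h2 : A = D
    · exact Or.inr (Or.inl h2)
    refine Or.inr (Or.inr ?_)
    obtain ⟨a, ha⟩ := hB.nonempty A hA
    rcases h with h | h | h
    · rcases subset_factor hB hC hD hx hA h with hc | hc
      · refine ⟨Or.inl hc, Or.inr (Or.inr fun h' => ?_)⟩
        have := hB.union_of_mem h' hC (v := a) (by simp [ha]) (hc ha)
        have e : A ∪ D ∪ C = C ∪ D := by ext v; have := @hc v; grind
        exact hx (e ▸ this)
      · refine ⟨Or.inr (Or.inr fun h' => ?_), Or.inl hc⟩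
        have := hB.union_of_mem h' hD (v := a) (by simp [ha]) (hc ha)
        have e : A ∪ C ∪ D = C ∪ D := by ext v; have := @hc v; grind
        exact hx (e ▸ this)
    · exact ⟨Or.inr (Or.inl (Finset.subset_union_left.trans h)),
        Or.inr (Or.inl (Finset.subset_union_right.trans h))⟩
    · obtain ⟨c, hc⟩ := hB.nonempty C hC
      obtain ⟨d, hd⟩ := hB.nonempty D hD
      refine ⟨Or.inr (Or.inr fun h' => h ?_), Or.inr (Or.inr fun h' => h ?_)⟩
      · have := hB'.union_of_mem (Or.inr h') (Or.inl rfl) (v := c) (by simp [hc]) (by simp [hc])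
        have e : A ∪ C ∪ (C ∪ D) = A ∪ (C ∪ D) := by ext v; grind
        exact e ▸ this
      · have := hB'.union_of_mem (Or.inr h') (Or.inl rfl) (v := d) (by simp [hd]) (by simp [hd])
        have e : A ∪ D ∪ (C ∪ D) = A ∪ (C ∪ D) := by ext v; grind
        exact e ▸ this
  · intro h
    by_cases h1 : A ⊆ C ∪ D
    · exact Or.inl h1
    by_cases h2 : C ∪ D ⊆ A
    · exact Or.inr (Or.inl h2)
    have h3 : ¬ A ⊆ C := fun h => h1 (h.trans Finset.subset_union_left)
    have h4 : ¬ A ⊆ D := fun h => h1 (h.trans Finset.subset_union_right)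
    rcases h with rfl | rfl | ⟨hAC, hAD⟩
    · exact absurd (Finset.Subset.refl _) h3
    · exact absurd (Finset.Subset.refl _) h4
    refine Or.inr (Or.inr ?_)
    rintro (h' | h')
    · exact h1 (h' ▸ Finset.subset_union_left)
    · rcases hAC with hAC | hAC | hAC
      · exact h3 hAC
      · rcases hAD with hAD | hAD | hAD
        · exact h4 hAD
        · exact h2 (Finset.union_subset hAC hAD)
        · have e : A ∪ (C ∪ D) = A ∪ D := by
            rw [← Finset.union_assoc, Finset.union_eq_left.2 hAC]
          exact hAD (e ▸ h')
      · rcases hAD with hAD | hAD | hAD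
        · exact h4 hAD
        · have e : A ∪ (C ∪ D) = A ∪ C := by
            rw [Finset.union_comm C D, ← Finset.union_assoc, Finset.union_eq_left.2 hAD]
          exact hAC (e ▸ h')
        · rw [← Finset.union_assoc] at h'
          exact no_bad_triple hB hs hA hC hD hAC hAD hx h'

theorem isEdge_pair (hC : C ∈ B) (hD : D ∈ B) (hx : C ∪ D ∉ B) :
    IsEdge (nested B) {C, D} := by
  have hne : C ≠ D := by rintro rfl; simp [hC] at hx
  have hCu : C ≠ Finset.univ := by
    rintro rfl
    exact hx (by rwa [Finset.union_eq_left.2 (Finset.subset_univ _)])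
  have hDu : D ≠ Finset.univ := by
    rintro rfl
    exact hx (by rwa [Finset.union_eq_right.2 (Finset.subset_univ _)])
  refine ⟨⟨by simp, ?_, ?_⟩, Finset.card_pair hne⟩
  · simp [hC, hD, hCu, hDu]
  · have : Compat B C D := Or.inr (Or.inr hx)
    have r : ∀ A, Compat B A A := fun A => Or.inl (Finset.Subset.refl _)
    simp [this, this.symm, r]

/-- Adding the disjoint union `C ⊔ D` of two members to a building set subdivides the nested set
complex at the edge `{C, D}`, the new vertex being `C ⊔ D`. -/
theorem isom_subdiv_nested (hB : Building B) (hs : Splits B)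
    (hB' : Building (insert (C ∪ D) B)) (hC : C ∈ B) (hD : D ∈ B) (hx : C ∪ D ∉ B) :
    Isom (subdiv (nested B) {C, D}) (nested (insert (C ∪ D) B)) := by
  have hE := isEdge_pair hC hD hx
  have hN := isComplex_nested B
  have hxu : C ∪ D ≠ Finset.univ := fun h => hx (h ▸ hB.top)
  have r : ∀ (B : Set (Finset V)) A, Compat B A A := fun B A => Or.inl (Finset.Subset.refl _)
  let f : Option (Finset V) → Finset V := fun o => o.elim (C ∪ D) id
  have himg : ∀ t : Finset (Finset V), (t.image some).image f = t := by
    intro t; simp [Finset.image_image, f, Function.comp_def]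
  refine IsoMap.isom (f := f) (isComplex_subdiv hN hE.1) (isComplex_nested _)
    (IsoMap.of ?_ ?_ ?_)
  · rintro (_ | A) hA (_ | A') hA' h
    · rfl
    · rw [verts_subdiv_some hE.2, mem_verts_nested] at hA'
      exact absurd hA'.1 (by have : C ∪ D = A' := h
                             rwa [← this])
    · rw [verts_subdiv_some hE.2, mem_verts_nested] at hA
      exact absurd hA.1 (by have : A = C ∪ D := h
                            rwa [this])
    · exact congrArg some h
  · intro A hA
    rw [mem_verts_nested] at hA
    rcases hA with ⟨rfl | hA, hu⟩
    · exact ⟨none, verts_subdiv_none hN hE.1, rfl⟩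
    · exact ⟨some A, (verts_subdiv_some hE.2).2 (mem_verts_nested.2 ⟨hA, hu⟩), rfl⟩
  · intro s hs'
    obtain ⟨t, h⟩ := option_finset_cases s
    have ht : ∀ A ∈ t, A ∈ B ∧ A ≠ Finset.univ := fun A hA =>
      mem_verts_nested.1 ((verts_subdiv_some hE.2).1 (hs' (by rcases h with rfl | rfl <;> simpa using hA)))
    have hsub : ({C, D} : Finset (Finset V)) ⊆ t ↔ C ∈ t ∧ D ∈ t := by
      simp [Finset.insert_subset_iff]
    rcases h with rfl | rfl
    · rw [himg, mem_subdiv_some, hsub]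
      constructor
      · rintro ⟨⟨h1, h2, h3⟩, h4⟩
        refine ⟨h1, fun A hA => ⟨Or.inr (ht A hA).1, (ht A hA).2⟩, fun A hA A' hA' => ?_⟩
        rw [compat_insert_iff hB hC hD hx (ht A hA).1 (ht A' hA').1]
        refine ⟨h3 A hA A' hA', ?_, ?_⟩
        · rintro ⟨rfl, rfl⟩; exact h4 ⟨hA, hA'⟩
        · rintro ⟨rfl, rfl⟩; exact h4 ⟨hA', hA⟩
      · rintro ⟨h1, h2, h3⟩
        have h3' := fun A hA A' hA' =>
          (compat_insert_iff hB hC hD hx (ht A hA).1 (ht A' hA').1).1 (h3 A hA A' hA')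
        refine ⟨⟨h1, ht, fun A hA A' hA' => (h3' A hA A' hA').1⟩, ?_⟩
        rintro ⟨h5, h6⟩
        exact (h3' C h5 D h6).2.1 ⟨rfl, rfl⟩
    · have hi : (insert none (t.image some)).image f = insert (C ∪ D) t := by
        rw [Finset.image_insert, himg]; rfl
      rw [hi, mem_subdiv_none hN hE.1, hsub]
      constructor
      · rintro ⟨⟨h1, h2, h3⟩, h4⟩
        have hnew : ∀ A ∈ t, Compat (insert (C ∪ D) B) A (C ∪ D) := fun A hA =>
          (compat_new_iff hB hs hB' hC hD hx (ht A hA).1).2 (Or.inr (Or.inr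
            ⟨h3 A (by simp [hA]) C (by simp), h3 A (by simp [hA]) D (by simp)⟩))
        refine ⟨by simp, fun A hA => ?_, fun A hA A' hA' => ?_⟩
        · rcases Finset.mem_insert.1 hA with rfl | hA
          · exact ⟨Or.inl rfl, hxu⟩
          · exact ⟨Or.inr (ht A hA).1, (ht A hA).2⟩
        · rw [Finset.mem_insert] at hA hA'
          rcases hA with rfl | hA <;> rcases hA' with rfl | hA'
          · exact r _ _
          · exact (hnew _ hA').symm
          · exact hnew _ hA
          · rw [compat_insert_iff hB hC hD hx (ht A hA).1 (ht A' hA').1]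
            refine ⟨h3 A (by simp [hA]) A' (by simp [hA']), ?_, ?_⟩
            · rintro ⟨h5, h6⟩; exact h4 ⟨h5 ▸ hA, h6 ▸ hA'⟩
            · rintro ⟨h5, h6⟩; exact h4 ⟨h6 ▸ hA', h5 ▸ hA⟩
      · rintro ⟨h1, h2, h3⟩
        have h3' := fun A hA A' hA' =>
          (compat_insert_iff hB hC hD hx (ht A hA).1 (ht A' hA').1).1
            (h3 A (Finset.mem_insert_of_mem hA) A' (Finset.mem_insert_of_mem hA'))
        have hCD : Compat B C D := Or.inr (Or.inr hx)
        have hnew : ∀ A ∈ t, Compat B A C ∧ Compat B A D := fun A hA => by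
          rcases (compat_new_iff hB hs hB' hC hD hx (ht A hA).1).1
            (h3 A (Finset.mem_insert_of_mem hA) _ (Finset.mem_insert_self _ _)) with rfl | rfl | h
          · exact ⟨r _ _, hCD⟩
          · exact ⟨hCD.symm, r _ _⟩
          · exact h
        refine ⟨⟨by simp, fun A hA => ?_, fun A hA A' hA' => ?_⟩, ?_⟩
        · rcases Finset.mem_union.1 hA with hA | hA
          · exact ht A hA
          · exact hE.1.2.1 A hA
        · rcases Finset.mem_union.1 hA with hA | hA <;>
            rcases Finset.mem_union.1 hA' with hA' | hA'
          · exact (h3' A hA A' hA').1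
          · have := hnew A hA
            simp only [Finset.mem_insert, Finset.mem_singleton] at hA'
            rcases hA' with rfl | rfl
            exacts [this.1, this.2]
          · have := hnew A' hA'
            simp only [Finset.mem_insert, Finset.mem_singleton] at hA
            rcases hA with rfl | rfl
            exacts [this.1.symm, this.2.symm]
          · exact hE.1.2.2 A hA A' hA'
        · rintro ⟨h5, h6⟩
          exact (h3' C h5 D h6).2.1 ⟨rfl, rfl⟩

end step

/-- Between nested building sets `B ⊂ G` with `Splits`, there is a set `C ⊔ D ∈ G \ B` with
`C, D ∈ B` whose addition to `B` gives a building set: any one that is maximal under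
inclusion. -/
theorem exists_next {V : Type} [Fintype V] {B G : Set (Finset V)} (hB : Building B)
    (hG : Building G) (hGs : Splits G) (hBG : B ⊆ G) (hne : B ≠ G) :
    ∃ C ∈ B, ∃ D ∈ B, Disjoint C D ∧ C ∪ D ∈ G ∧ C ∪ D ∉ B ∧ Building (insert (C ∪ D) B) := by
  let T : Set (Finset V) := {x | x ∈ G ∧ x ∉ B ∧ ∃ C ∈ B, ∃ D ∈ B, Disjoint C D ∧ C ∪ D = x}
  have hTne : T.Nonempty := by
    have hd : (G \ B).Nonempty := by
      by_contra h
      rw [Set.not_nonempty_iff_eq_empty, Set.sdiff_eq_empty] at h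
      exact hne (hBG.antisymm h)
    -- a smallest missing member of `G` splits into two members of `B`
    obtain ⟨x, hx⟩ := (Set.toFinite (G \ B)).exists_minimal hd
    have hxc : 2 ≤ x.card := by
      have h0 := (hG.nonempty x hx.1.1).card_pos
      by_contra h
      obtain ⟨v, rfl⟩ := Finset.card_eq_one.1 (by omega : x.card = 1)
      exact hx.1.2 (hB.single v)
    obtain ⟨C, hC, D, hD, hdis, hu⟩ := hGs x hx.1.1 hxc
    -- by minimality of `x`, its two parts are not missing
    have aux : ∀ E F : Finset V, E ∈ G → F ∈ G → Disjoint E F → E ∪ F = x → E ∈ B := by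
      intro E F hE hF hEF hu
      by_contra hEB
      have hxE : x ⊆ E := hx.2 ⟨hE, hEB⟩ (hu ▸ Finset.subset_union_left)
      obtain ⟨v, hv⟩ := hG.nonempty F hF
      have hvx : v ∈ x := hu ▸ Finset.mem_union_right _ hv
      exact Finset.disjoint_left.1 hEF (hxE hvx) hv
    exact ⟨x, hx.1.1, hx.1.2, C, aux C D hC hD hdis hu, D,
      aux D C hD hC hdis.symm (by rw [Finset.union_comm, hu]), hdis, hu⟩
  obtain ⟨x, hx⟩ := (Set.toFinite T).exists_maximal hTne
  obtain ⟨⟨hxG, hxB, C, hC, D, hD, hdis, rfl⟩, hmax⟩ := hx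
  refine ⟨C, hC, D, hD, hdis, hxG, hxB, ?_⟩
  -- if `y` meets `C`, then `y ∪ (C ∪ D) = (y ∪ C) ∪ D` is again a union of two members of `B`,
  -- so by maximality it is not missing
  have half : ∀ C D : Finset V, C ∈ B → D ∈ B → C ∪ D ∈ G → (∀ z ∈ T, C ∪ D ⊆ z → z ⊆ C ∪ D) →
      ∀ y ∈ B, (∃ v ∈ y, v ∈ C) → y ∪ (C ∪ D) ∈ insert (C ∪ D) B := by
    rintro C D hC hD hxG hmax y hy ⟨v, hvy, hvC⟩
    by_contra hcon
    have hyC := hB.union_of_mem hy hC hvy hvC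
    have e : y ∪ (C ∪ D) = y ∪ C ∪ D := (Finset.union_assoc _ _ _).symm
    have hz : y ∪ (C ∪ D) ∈ T := by
      refine ⟨hG.union_of_mem (hBG hy) hxG hvy (by simp [hvC]), fun h => hcon (Or.inr h),
        y ∪ C, hyC, D, hD, ?_, e.symm⟩
      rw [Finset.disjoint_left]
      intro w hw hwD
      exact hcon (Or.inr (e ▸ hB.union_of_mem hyC hD hw hwD))
    have := hmax _ hz Finset.subset_union_right
    exact hcon (Or.inl (this.antisymm Finset.subset_union_right))
  have full : ∀ y ∈ B, (y ∩ (C ∪ D)).Nonempty → y ∪ (C ∪ D) ∈ insert (C ∪ D) B := by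
    rintro y hy ⟨v, hv⟩
    rw [Finset.mem_inter, Finset.mem_union] at hv
    rcases hv with ⟨hvy, hv | hv⟩
    · exact half C D hC hD hxG (fun z hz => hmax hz) y hy ⟨v, hvy, hv⟩
    · have e := Finset.union_comm C D
      rw [e]
      exact half D C hD hC (e ▸ hxG) (fun z hz => e ▸ hmax hz) y hy ⟨v, hvy, hv⟩
  refine ⟨?_, fun v => Or.inr (hB.single v), Or.inr hB.top, ?_⟩
  · rintro A (rfl | hA)
    · exact hG.nonempty _ hxG
    · exact hB.nonempty A hA
  · rintro A (rfl | hA) A' (rfl | hA') h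
    · left; simp
    · rw [Finset.union_comm (C ∪ D) A']
      exact full A' hA' (by rwa [Finset.inter_comm])
    · exact full A hA h
    · right
      apply hB.union <;> assumption

/-- Enlarging a building set with `Splits` to another such one is an iterated edge subdivision on
nested set complexes; the induction is on the number `m` of missing members. -/
theorem iterSub_nested_of_subset {V U : Type} [Fintype V] {L : SCplx U} (hL : IsComplex L)
    {G : Set (Finset V)} (hG : Building G) (hGs : Splits G) :
    ∀ (m : ℕ) (B : Set (Finset V)), (G \ B).ncard = m → Building B → Splits B → B ⊆ G →
      IterSub L (nested B) → IterSub L (nested G) := by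
  intro m
  induction m using Nat.strong_induction_on with
  | _ m ih =>
  intro B hm hB hs hBG h
  by_cases hne : B = G
  · exact hne ▸ h
  obtain ⟨C, hC, D, hD, hdis, hxG, hxB, hB'⟩ := exists_next hB hG hGs hBG hne
  refine ih _ ?_ (insert (C ∪ D) B) rfl hB' ?_ (Set.insert_subset hxG hBG)
    (h.snoc hL (isComplex_nested B) (isEdge_pair hC hD hxB)
      (isom_subdiv_nested hB hs hB' hC hD hxB))
  · rw [← hm]
    refine Set.ncard_lt_ncard ⟨Set.sdiff_subset_sdiff_right (Set.subset_insert _ _), fun hh => ?_⟩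
      (Set.toFinite _)
    exact (hh ⟨hxG, hxB⟩).2 (Or.inl rfl)
  · rintro A (rfl | hA) hc
    · exact ⟨C, Or.inr hC, D, Or.inr hD, hdis, rfl⟩
    · obtain ⟨E, hE, F, hF, h1, h2⟩ := hs A hA hc
      exact ⟨E, Or.inr hE, F, Or.inr hF, h1, h2⟩

/-! ### The octahedron as a nested set complex -/

section chain

variable {V : Type} [Fintype V] {n : ℕ}

/-- The initial segment of `V` up to position `k`, for the enumeration `r` of `V`. -/
def seg (r : V ≃ Fin (n + 1)) (k : Fin (n + 1)) : Finset V :=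
  Finset.univ.filter fun v => r v ≤ k

theorem mem_seg {r : V ≃ Fin (n + 1)} {k : Fin (n + 1)} {v : V} : v ∈ seg r k ↔ r v ≤ k := by
  simp [seg]

/-- The building set of the singletons and the initial segments of an enumeration of `V`. -/
def chainB (r : V ≃ Fin (n + 1)) : Set (Finset V) :=
  {A | (∃ v, A = {v}) ∨ ∃ k, A = seg r k}

theorem seg_last (r : V ≃ Fin (n + 1)) : seg r (Fin.last n) = Finset.univ := by
  ext v; simp [mem_seg, Fin.le_last]

theorem building_chainB (r : V ≃ Fin (n + 1)) : Building (chainB r) := by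
  have sing : ∀ (v : V) (A : Finset V), A ∈ chainB r → v ∈ A → {v} ∪ A ∈ chainB r := by
    intro v A hA hv
    rwa [Finset.union_eq_right.2 (by simpa using hv)]
  refine ⟨?_, fun v => Or.inl ⟨v, rfl⟩, Or.inr ⟨Fin.last n, (seg_last r).symm⟩, ?_⟩
  · rintro A (⟨v, rfl⟩ | ⟨k, rfl⟩)
    · simp
    · exact ⟨r.symm 0, by simp [mem_seg]⟩
  · rintro A hA A' hA' ⟨w, hw⟩
    rw [Finset.mem_inter] at hw
    rcases id hA with ⟨v, rfl⟩ | ⟨k, rfl⟩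
    · rw [Finset.mem_singleton] at hw
      exact sing v A' hA' (hw.1 ▸ hw.2)
    · rcases id hA' with ⟨v, rfl⟩ | ⟨l, rfl⟩
      · rw [Finset.mem_singleton] at hw
        rw [Finset.union_comm]
        exact sing v _ hA (hw.2 ▸ hw.1)
      · refine Or.inr ⟨max k l, ?_⟩
        ext u
        simp [mem_seg]

theorem splits_chainB (r : V ≃ Fin (n + 1)) : Splits (chainB r) := by
  rintro A (⟨v, rfl⟩ | ⟨k, rfl⟩) hc
  · simp at hc
  · induction k using Fin.cases with
    | zero =>
      have : seg r 0 = {r.symm 0} := by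
        ext v; simp [mem_seg, Equiv.eq_symm_apply]
      simp [this] at hc
    | succ j =>
      refine ⟨seg r j.castSucc, Or.inr ⟨_, rfl⟩, {r.symm j.succ}, Or.inl ⟨_, rfl⟩, ?_, ?_⟩
      · simp [mem_seg]
      · ext v
        simp only [Finset.mem_union, mem_seg, Finset.mem_singleton, Equiv.eq_symm_apply,
          Fin.le_def, Fin.ext_iff, Fin.val_castSucc, Fin.val_succ]
        omega

/-- The vertex of the nested set complex of `chainB r` that corresponds to a vertex of the
octahedron: the antipodal pair of index `i` is sent to `{i + 1}` and `{0, …, i}`. -/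
def octaMap (r : V ≃ Fin (n + 1)) (p : Fin n × Bool) : Finset V :=
  if p.2 then {r.symm p.1.succ} else seg r p.1.castSucc

theorem octaMap_true (r : V ≃ Fin (n + 1)) (i : Fin n) :
    octaMap r (i, true) = {r.symm i.succ} := by simp [octaMap]

theorem octaMap_false (r : V ≃ Fin (n + 1)) (i : Fin n) :
    octaMap r (i, false) = seg r i.castSucc := by simp [octaMap]

theorem seg_ne_univ (r : V ≃ Fin (n + 1)) (i : Fin n) : seg r i.castSucc ≠ Finset.univ := by
  intro h
  have : r.symm (Fin.last n) ∈ seg r i.castSucc := by rw [h]; simp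
  rw [mem_seg, Equiv.apply_symm_apply] at this
  exact absurd this (not_le.2 (Fin.castSucc_lt_last i))

theorem seg_subset_seg (r : V ≃ Fin (n + 1)) {k l : Fin (n + 1)} (h : k ≤ l) :
    seg r k ⊆ seg r l := by
  intro v hv
  rw [mem_seg] at hv ⊢
  exact hv.trans h

theorem octaMap_injective (r : V ≃ Fin (n + 1)) : Function.Injective (octaMap r) := by
  have aux : ∀ i j : Fin n, octaMap r (i, true) ≠ octaMap r (j, false) := by
    intro i j h
    rw [octaMap_true, octaMap_false] at h
    have : r.symm 0 ∈ ({r.symm i.succ} : Finset V) := by rw [h]; simp [mem_seg]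
    simp at this
    exact absurd this.symm (Fin.succ_ne_zero i)
  rintro ⟨i, _ | _⟩ ⟨j, _ | _⟩ h
  · rw [octaMap_false, octaMap_false] at h
    have h1 : r.symm i.castSucc ∈ seg r j.castSucc := by rw [← h]; simp [mem_seg]
    have h2 : r.symm j.castSucc ∈ seg r i.castSucc := by rw [h]; simp [mem_seg]
    simp only [mem_seg, Equiv.apply_symm_apply] at h1 h2
    have := le_antisymm h1 h2
    rw [Fin.castSucc_inj] at this
    rw [this]
  · exact absurd h.symm (aux _ _)
  · exact absurd h (aux _ _)
  · rw [octaMap_true, octaMap_true] at h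
    simp at h
    rw [h]

theorem compat_octaMap (r : V ≃ Fin (n + 1)) (i j : Fin n) :
    Compat (chainB r) (octaMap r (i, true)) (octaMap r (j, false)) ↔ i ≠ j := by
  rw [octaMap_true, octaMap_false]
  constructor
  · rintro (h | h | h) rfl
    · simp [mem_seg] at h
    · have := @h (r.symm 0) (by simp [mem_seg])
      simp at this
      exact absurd this.symm (Fin.succ_ne_zero i)
    · refine h (Or.inr ⟨i.succ, ?_⟩)
      ext v
      simp only [Finset.mem_union, mem_seg, Finset.mem_singleton, Equiv.eq_symm_apply,
        Fin.le_def, Fin.ext_iff, Fin.val_castSucc, Fin.val_succ]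
      omega
  · intro hij
    rw [Ne, Fin.ext_iff] at hij
    by_cases hlt : i.val < j.val
    · left
      simp [mem_seg, Fin.le_def]
      omega
    · refine Or.inr (Or.inr ?_)
      rintro (⟨v, hv⟩ | ⟨k, hk⟩)
      · have h1 : r.symm 0 ∈ ({v} : Finset V) := by rw [← hv]; simp [mem_seg]
        have h2 : r.symm i.succ ∈ ({v} : Finset V) := by rw [← hv]; simp
        rw [Finset.mem_singleton] at h1 h2
        have := r.symm.injective (h1.trans h2.symm)
        exact absurd this.symm (Fin.succ_ne_zero i)
      ·
        -- position `j + 1` lies below `i + 1` but is not in the union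
        have h2 : r.symm i.succ ∈ seg r k := by rw [← hk]; simp
        have h3 : r.symm j.succ ∈ seg r k := by
          rw [mem_seg, Equiv.apply_symm_apply] at h2 ⊢
          rw [Fin.le_def] at h2 ⊢
          rw [Fin.val_succ] at h2 ⊢
          omega
        rw [← hk] at h3
        simp [mem_seg, Fin.ext_iff] at h3
        omega

theorem compat_octaMap_true (r : V ≃ Fin (n + 1)) (i j : Fin n) :
    Compat (chainB r) (octaMap r (i, true)) (octaMap r (j, true)) := by
  rw [octaMap_true, octaMap_true]
  by_cases hij : i = j
  · left; simp [hij]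
  refine Or.inr (Or.inr ?_)
  rintro (⟨v, hv⟩ | ⟨k, hk⟩)
  · have h1 : r.symm i.succ ∈ ({v} : Finset V) := by rw [← hv]; simp
    have h2 : r.symm j.succ ∈ ({v} : Finset V) := by rw [← hv]; simp
    rw [Finset.mem_singleton] at h1 h2
    exact hij (Fin.succ_injective _ (r.symm.injective (h1.trans h2.symm)))
  · have h1 : r.symm 0 ∈ seg r k := by simp [mem_seg]
    rw [← hk] at h1
    simp at h1
    rcases h1 with h | h
    · exact Fin.succ_ne_zero _ h.symm
    · exact Fin.succ_ne_zero _ h.symm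

theorem compat_octaMap_false (r : V ≃ Fin (n + 1)) (i j : Fin n) :
    Compat (chainB r) (octaMap r (i, false)) (octaMap r (j, false)) := by
  rw [octaMap_false, octaMap_false]
  rcases le_total i.castSucc j.castSucc with h | h
  · exact Or.inl (seg_subset_seg r h)
  · exact Or.inr (Or.inl (seg_subset_seg r h))

theorem isComplex_octa (n : ℕ) : IsComplex (octa n) :=
  ⟨fun _ h => h.1, fun _ h _ ht hn => ⟨hn, fun i hi => h.2 i ⟨ht hi.1, ht hi.2⟩⟩⟩

theorem isom_octa_nested (hn : 1 ≤ n) (r : V ≃ Fin (n + 1)) :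
    Isom (octa n) (nested (chainB r)) := by
  refine IsoMap.isom (f := octaMap r) (isComplex_octa n) (isComplex_nested _)
    (IsoMap.of (octaMap_injective r).injOn ?_ ?_)
  · intro A hA
    have hv : ∀ p : Fin n × Bool, p ∈ verts (octa n) := by
      rintro ⟨i, b⟩
      refine ⟨by simp, fun j hj => ?_⟩
      simp only [Finset.mem_singleton, Prod.mk.injEq] at hj
      exact absurd (hj.1.2.trans hj.2.2.symm) (by simp)
    rw [mem_verts_nested] at hA
    suffices ∃ p, octaMap r p = A from this.imp fun p hp => ⟨hv p, hp⟩
    obtain ⟨⟨v, rfl⟩ | ⟨k, rfl⟩, hu⟩ := hA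
    · rcases Fin.eq_zero_or_eq_succ (r v) with h | ⟨i, h⟩
      · refine ⟨(⟨0, hn⟩, false), ?_⟩
        rw [octaMap_false]
        ext w
        have h0 : (r v).val = 0 := by rw [h]; rfl
        rw [mem_seg, Finset.mem_singleton, ← r.apply_eq_iff_eq, Fin.le_def, Fin.ext_iff, h0]
        simp
      · exact ⟨(i, true), by rw [octaMap_true, ← h]; simp⟩
    · rcases Fin.eq_castSucc_or_eq_last k with ⟨i, rfl⟩ | rfl
      · exact ⟨(i, false), octaMap_false r i⟩
      · exact absurd (seg_last r) hu
  · intro s _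
    constructor
    · rintro ⟨h1, h2⟩
      refine ⟨h1.image _, ?_, ?_⟩
      · intro A hA
        obtain ⟨⟨i, _ | _⟩, hp, rfl⟩ := Finset.mem_image.1 hA
        · rw [octaMap_false]
          exact ⟨Or.inr ⟨_, rfl⟩, seg_ne_univ r i⟩
        · rw [octaMap_true]
          refine ⟨Or.inl ⟨_, rfl⟩, fun h => ?_⟩
          have : r.symm 0 ∈ ({r.symm i.succ} : Finset V) := by rw [h]; simp
          simp at this
          exact absurd this.symm (Fin.succ_ne_zero i)
      · intro A hA A' hA'
        obtain ⟨⟨i, b⟩, hp, rfl⟩ := Finset.mem_image.1 hA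
        obtain ⟨⟨j, c⟩, hq, rfl⟩ := Finset.mem_image.1 hA'
        cases b <;> cases c
        · exact compat_octaMap_false r i j
        · refine ((compat_octaMap r j i).2 ?_).symm
          rintro rfl
          exact h2 j ⟨hq, hp⟩
        · refine (compat_octaMap r i j).2 ?_
          rintro rfl
          exact h2 i ⟨hp, hq⟩
        · exact compat_octaMap_true r i j
    · rintro ⟨h1, _, h3⟩
      refine ⟨by simpa using h1, fun i hi => ?_⟩
      exact (compat_octaMap r i i).1 (h3 _ (Finset.mem_image_of_mem _ hi.1) _
        (Finset.mem_image_of_mem _ hi.2)) rfl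

end chain

/-! ### The relative barycentric subdivision as a nested set complex -/

section relbary

variable {V : Type} {K : SCplx V}

/-- The building set of the singletons and the nonempty subsets of `V` that are not in `K`. -/
def nonfaces (K : SCplx V) : Set (Finset V) :=
  {A | A.Nonempty ∧ (A.card = 1 ∨ A ∉ K)}

theorem mem_nonfaces_of_subset (hK : IsComplex K) {A A' : Finset V} (hA : A ∉ K)
    (hn : A.Nonempty) (h : A ⊆ A') : A' ∈ nonfaces K :=
  ⟨hn.mono h, Or.inr fun hm => hA (hK.2 _ hm _ h hn)⟩

/-- A nonface of a flag complex contains two points not joined by an edge; a point that is not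
a vertex counts as joined to nothing. -/
theorem exists_missing_edge (hK : IsComplex K) (hf : FlagCplx K) {A : Finset V}
    (hA : A ∉ K) (hc : 2 ≤ A.card) : ∃ u ∈ A, ∃ v ∈ A, u ≠ v ∧ ({u, v} : Finset V) ∉ K := by
  by_contra! hcon
  obtain ⟨a, ha, b, hb, hab⟩ := Finset.one_lt_card.1 hc
  refine hA (hf A ⟨a, ha⟩ (fun v hv => ?_) (fun u hu v hv h => hcon u hu v hv h))
  obtain ⟨w, hw, hwv⟩ : ∃ w ∈ A, w ≠ v := by
    by_cases h : a = v
    · exact ⟨b, hb, fun h' => hab (h.trans h'.symm)⟩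
    · exact ⟨a, ha, h⟩
  exact hK.2 _ (hcon w hw v hv hwv) _ (by simp) (by simp)

theorem building_nonfaces [Fintype V] [Nonempty V] (hK : IsComplex K) (hu : Finset.univ ∉ K) :
    Building (nonfaces K) := by
  refine ⟨fun A h => h.1, fun v => ⟨by simp, by simp⟩, ⟨Finset.univ_nonempty, Or.inr hu⟩, ?_⟩
  rintro A ⟨hn, hA | hA⟩ A' ⟨hn', hA'⟩ ⟨w, hw⟩
  · obtain ⟨v, rfl⟩ := Finset.card_eq_one.1 hA
    rw [Finset.mem_inter, Finset.mem_singleton] at hw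
    rw [Finset.union_eq_right.2 (by simpa using hw.1 ▸ hw.2)]
    exact ⟨hn', hA'⟩
  · exact mem_nonfaces_of_subset hK hA hn Finset.subset_union_left

/-- A nonface with at least three elements contains a missing edge, so some element can be
removed without making it a face. -/
theorem splits_nonfaces (hK : IsComplex K) (hf : FlagCplx K) : Splits (nonfaces K) := by
  rintro A ⟨hn, hA⟩ hc
  have hA : A ∉ K := hA.resolve_left (by omega)
  obtain ⟨u, hu, v, hv, huv, he⟩ := exists_missing_edge hK hf hA hc
  suffices ∃ c ∈ A, A.erase c ∈ nonfaces K by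
    obtain ⟨c, hcA, h⟩ := this
    refine ⟨_, h, {c}, ⟨by simp, by simp⟩, by simp, ?_⟩
    ext w
    by_cases hw : w = c <;> simp [hw, hcA]
  by_cases hc2 : A.card = 2
  · refine ⟨u, hu, ⟨v, by simp [hv, huv.symm]⟩, Or.inl ?_⟩
    rw [Finset.card_erase_of_mem hu, hc2]
  · have hsub : ({u, v} : Finset V) ⊆ A := by simp [Finset.insert_subset_iff, hu, hv]
    obtain ⟨c, hcA, hcn⟩ := Finset.exists_mem_notMem_of_card_lt_card
      (s := ({u, v} : Finset V)) (t := A) (by rw [Finset.card_pair huv]; omega)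
    refine ⟨c, hcA, mem_nonfaces_of_subset hK he (by simp) ?_⟩
    intro w hw
    rw [Finset.mem_erase]
    exact ⟨fun h => hcn (h ▸ hw), hsub hw⟩

/-- In a nested set of `nonfaces K`, the vertices of `K` are pairwise joined by edges and so span
a face of `K` by flagness, while the other members are pairwise comparable. -/
theorem relbary_eq_nested [Fintype V] {L : SCplx V} (hL : L = {s | s.Nonempty ∧ s ≠ Finset.univ})
    (hKL : K ⊆ L) (hK : IsComplex K) (hf : FlagCplx K) :
    relbary L K = nested (nonfaces K) := by
  subst hL
  ext S
  constructor
  · rintro ⟨hn, τ, c, hτ, hc, hch, hτc, rfl⟩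
    have hsub : ∀ t : Finset V, t ⊆ τ → t.Nonempty → t ∈ K := by
      intro t ht htn
      rcases hτ with rfl | hτ
      · rw [Finset.subset_empty.1 ht] at htn
        simp at htn
      · exact hK.2 _ hτ _ ht htn
    refine ⟨hn, fun A hA => ?_, fun A hA A' hA' => ?_⟩
    · rcases Finset.mem_union.1 hA with hA | hA
      · obtain ⟨v, hv, rfl⟩ := Finset.mem_image.1 hA
        exact ⟨⟨by simp, by simp⟩, (hKL (hsub {v} (by simpa using hv) (by simp))).2⟩
      · exact ⟨⟨(hc A hA).1.1, Or.inr (hc A hA).2⟩, (hc A hA).1.2⟩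
    · rcases Finset.mem_union.1 hA with hA | hA <;> rcases Finset.mem_union.1 hA' with hA' | hA'
      · obtain ⟨u, hu, rfl⟩ := Finset.mem_image.1 hA
        obtain ⟨v, hv, rfl⟩ := Finset.mem_image.1 hA'
        by_cases huv : u = v
        · left; simp [huv]
        · refine Or.inr (Or.inr ?_)
          rintro ⟨_, h | h⟩
          · rw [← Finset.insert_eq, Finset.card_pair huv] at h
            omega
          · refine h (hsub _ ?_ (by simp))
            exact Finset.union_subset (by simpa using hu) (by simpa using hv)
      · obtain ⟨u, hu, rfl⟩ := Finset.mem_image.1 hA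
        left
        simpa using hτc A' hA' hu
      · obtain ⟨u, hu, rfl⟩ := Finset.mem_image.1 hA'
        right; left
        simpa using hτc A hA hu
      · rcases hch A hA A' hA' with h | h
        exacts [Or.inl h, Or.inr (Or.inl h)]
  · rintro ⟨hn, hB, hcomp⟩
    -- two members of `S` whose union is not a face of `K` are comparable
    have hcmp : ∀ A ∈ S, ∀ A' ∈ S, A ∉ K → A ⊆ A' ∨ A' ⊆ A := by
      intro A hA A' hA' hAK
      rcases hcomp A hA A' hA' with h | h | h
      · exact Or.inl h
      · exact Or.inr h
      · exact absurd (mem_nonfaces_of_subset hK hAK (hB A hA).1.1 Finset.subset_union_left) h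
    refine ⟨hn, Finset.univ.filter fun v => ({v} : Finset V) ∈ S ∧ ({v} : Finset V) ∈ K,
      S.filter fun A => A ∉ K, ?_, ?_, ?_, ?_, ?_⟩
    · rw [or_iff_not_imp_left]
      intro hne
      refine hf _ (Finset.nonempty_iff_ne_empty.2 hne) (fun v hv => ?_) fun u hu v hv huv => ?_
      · exact (Finset.mem_filter.1 hv).2.2
      · have hu := (Finset.mem_filter.1 hu).2
        have hv := (Finset.mem_filter.1 hv).2
        rcases hcomp _ hu.1 _ hv.1 with h | h | h
        · simp at h; exact absurd h huv
        · simp at h; exact absurd h.symm huv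
        · by_contra hnot
          exact h ⟨by simp, Or.inr (by rwa [← Finset.insert_eq])⟩
    · intro A hA
      have hA := Finset.mem_filter.1 hA
      exact ⟨⟨(hB A hA.1).1.1, (hB A hA.1).2⟩, hA.2⟩
    · intro A hA A' hA'
      exact hcmp A (Finset.mem_filter.1 hA).1 A' (Finset.mem_filter.1 hA').1
        (Finset.mem_filter.1 hA).2
    · intro A hA v hv
      have hA := Finset.mem_filter.1 hA
      have hv := (Finset.mem_filter.1 hv).2
      rcases hcmp A hA.1 _ hv.1 hA.2 with h | h
      · exact absurd (hK.2 _ hv.2 _ h (hB A hA.1).1.1) hA.2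
      · simpa using h
    · ext A
      simp only [Finset.mem_union, Finset.mem_image, Finset.mem_filter, Finset.mem_univ, true_and]
      constructor
      · intro hA
        by_cases hAK : A ∈ K
        · left
          rcases (hB A hA).1.2 with h | h
          · obtain ⟨v, rfl⟩ := Finset.card_eq_one.1 h
            exact ⟨v, ⟨hA, hAK⟩, rfl⟩
          · exact absurd hAK h
        · exact Or.inr ⟨hA, hAK⟩
      · rintro (⟨v, hv, rfl⟩ | h)
        exacts [hv.1, h.1]

end relbary

/-- Corollary `c:octahedron` of the paper:
if `K` is a flag subcomplex of `∂Δⁿ` (`n ≥ 1`), then the relative barycentric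
subdivision `b(∂Δⁿ, K)` is an iterated edge subdivision of the boundary `Oⁿ`
of the `n`-octahedron. -/
theorem relbary_bdSimplex_iterSub_of_octa
    (n : ℕ) (hn : 1 ≤ n) (K : SCplx (Fin (n + 1)))
    (hKsub : K ⊆ bdSimplex n) (hKcplx : IsComplex K) (hKflag : FlagCplx K) :
    IterSub (octa n) (relbary (bdSimplex n) K) := by
  have huniv : Finset.univ ∉ K := fun h => (hKsub h).2 rfl
  have hcard : 2 ≤ (Finset.univ : Finset (Fin (n + 1))).card := by simpa using hn
  obtain ⟨u, -, v, -, huv, he⟩ := exists_missing_edge hKcplx hKflag huniv hcard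
  -- an enumeration of the vertices that starts with the missing edge `{u, v}`
  obtain ⟨r, hru, hrv⟩ : ∃ r : Fin (n + 1) ≃ Fin (n + 1), (r u).val = 0 ∧ (r v).val = 1 := by
    let z : Fin (n + 1) := 0
    let o : Fin (n + 1) := ⟨1, by omega⟩
    have hzo : z ≠ o := by simp [z, o, Fin.ext_iff]
    have hs : z ≠ Equiv.swap u z v := by
      intro h
      apply huv
      have := congrArg (Equiv.swap u z) h
      simpa using this
    refine ⟨(Equiv.swap u z).trans (Equiv.swap (Equiv.swap u z v) o), ?_, ?_⟩
    · simp [Equiv.swap_apply_of_ne_of_ne hs hzo, z]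
    · simp [o]
  rw [relbary_eq_nested (L := bdSimplex n) rfl hKsub hKcplx hKflag]
  refine iterSub_nested_of_subset (isComplex_octa n) (building_nonfaces hKcplx huniv)
    (splits_nonfaces hKcplx hKflag) _ (chainB r) rfl (building_chainB r) (splits_chainB r) ?_
    (IterSub.iso (isom_octa_nested hn r))
  -- every initial segment with at least two elements contains the missing edge `{u, v}`
  rintro A (⟨w, rfl⟩ | ⟨k, rfl⟩)
  · exact ⟨by simp, by simp⟩
  · by_cases hk : k.val = 0
    · refine ⟨⟨u, by simp [mem_seg, Fin.le_def, hru]⟩, Or.inl ?_⟩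
      rw [Finset.card_eq_one]
      refine ⟨u, ?_⟩
      ext w
      rw [mem_seg, Finset.mem_singleton, ← r.apply_eq_iff_eq, Fin.le_def, Fin.ext_iff, hk, hru]
      omega
    · refine mem_nonfaces_of_subset hKcplx he (by simp) ?_
      intro w hw
      simp only [Finset.mem_insert, Finset.mem_singleton] at hw
      rw [mem_seg, Fin.le_def]
      rcases hw with rfl | rfl <;> omega
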